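/- Let N ∈ [1,∞), C > 0, and let V : [0,∞) → [0,∞) be nondecreasing and left-continuous with V(r) > 0 for r > 0 and V(r) ≤ C · max(1, r^N) for all r ≥ 0. Suppose that for every t > 0, (1/(2t)) ∫₀^∞ r V(r) exp(−r²/(4t)) dr = (1/(2Nt)) ∫₀^∞ V(r) ( r³/(2t) − 2r ) exp(−r²/(4t)) dr. Then there exists a constant c₁ > 0 such that V(r) = c₁ r^N for all r ≥ 0. -/

import Mathlib

open MeasureTheory Real

/-!
The integral identity is a first-order differential equation in disguise. Writing
`M s = ∫ r V(r) exp (-s r²) dr`, differentiation under the integral gives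
`M' s = -∫ r³ V(r) exp (-s r²) dr`, and at `t = 1 / (4 s)` the identity becomes
`s M' s = -((N + 2) / 2) M s`. Hence `M` is a multiple of `s ^ (-((N + 2) / 2))`, which is the
transform of a multiple of `r * r ^ N`. The values of the transform at the positive integers are
the moments of `exp (-r²)`, so by the Weierstrass approximation theorem they determine the function
almost everywhere; left-continuity removes the exceptional null set.
-/

open Filter Set Topology Polynomial

section MomentUniqueness

variable {α : Type*} [MeasurableSpace α] {μ : Measure α} {f u : α → ℝ} {a b : ℝ}

lemma integrable_mul_comp_of_continuous_of_mem_Icc {φ : ℝ → ℝ} (hφ : Continuous φ)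
    (hf : Integrable f μ) (hu : AEMeasurable u μ) (hmem : ∀ᵐ x ∂μ, u x ∈ Icc a b) :
    Integrable (fun x ↦ f x * φ (u x)) μ := by
  obtain ⟨C, hC⟩ := (isCompact_Icc (a := a) (b := b)).exists_bound_of_continuousOn hφ.continuousOn
  exact hf.mul_bdd (hφ.measurable.comp_aemeasurable hu).aestronglyMeasurable
    (hmem.mono fun x hx ↦ hC (u x) hx)

lemma integral_mul_eval_eq_zero_of_integral_mul_pow_eq_zero (hf : Integrable f μ)
    (hu : AEMeasurable u μ) (hmem : ∀ᵐ x ∂μ, u x ∈ Icc a b)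
    (hmoment : ∀ n : ℕ, ∫ x, f x * u x ^ n ∂μ = 0) (p : ℝ[X]) :
    ∫ x, f x * p.eval (u x) ∂μ = 0 := by
  simp only [eval_eq_sum_range, Finset.mul_sum, mul_left_comm (f _)]
  rw [integral_finsetSum _ fun n _ ↦ (integrable_mul_comp_of_continuous_of_mem_Icc
    (continuous_pow n) hf hu hmem).const_mul _]
  simp only [integral_const_mul, hmoment, mul_zero, Finset.sum_const_zero]

lemma integral_mul_comp_eq_zero_of_integral_mul_pow_eq_zero (hf : Integrable f μ)
    (hu : AEMeasurable u μ) (hmem : ∀ᵐ x ∂μ, u x ∈ Icc a b)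
    (hmoment : ∀ n : ℕ, ∫ x, f x * u x ^ n ∂μ = 0) {φ : ℝ → ℝ} (hφ : ContinuousOn φ (Icc a b)) :
    ∫ x, f x * φ (u x) ∂μ = 0 := by
  by_contra hne
  obtain ⟨ε, hε, hlt⟩ := exists_pos_mul_lt (norm_pos_iff.2 hne) (∫ x, ‖f x‖ ∂μ)
  obtain ⟨p, hp⟩ := exists_polynomial_near_of_continuousOn a b φ hφ ε hε
  have hint : Integrable (fun x ↦ f x * φ (u x)) μ := .of_integral_ne_zero hne
  have hpint : Integrable (fun x ↦ f x * p.eval (u x)) μ :=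
    integrable_mul_comp_of_continuous_of_mem_Icc p.continuous hf hu hmem
  have hdiff : ∫ x, f x * φ (u x) ∂μ = ∫ x, (f x * φ (u x) - f x * p.eval (u x)) ∂μ := by
    rw [integral_sub hint hpint,
      integral_mul_eval_eq_zero_of_integral_mul_pow_eq_zero hf hu hmem hmoment, sub_zero]
  refine hlt.not_ge ?_
  rw [hdiff, ← integral_mul_const]
  refine norm_integral_le_of_norm_le (hf.norm.mul_const ε) (hmem.mono fun x hx ↦ ?_)
  rw [← mul_sub, norm_mul, norm_sub_rev]
  exact mul_le_mul_of_nonneg_left (hp (u x) hx).le (norm_nonneg _)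

end MomentUniqueness

section GaussianTransform

/-- The Laplace transform of `f` in the variable `r²`, that is `s ↦ ∫₀^∞ f(r) exp (-s r²) dr`. It
turns the integral identity of the theorem into a differential equation. -/
noncomputable def gaussianTransform (f : ℝ → ℝ) (s : ℝ) : ℝ :=
  ∫ r in Ioi 0, f r * exp (-s * r ^ 2)

/-- The functions whose Gaussian transform converges absolutely for every `s > 0`, so that none of
the integrals defining `gaussianTransform` there is a junk value. -/
def GaussianIntegrable (f : ℝ → ℝ) : Prop :=
  ∀ s, 0 < s → IntegrableOn (fun r ↦ f r * exp (-s * r ^ 2)) (Ioi 0)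

variable {f g : ℝ → ℝ} {q s : ℝ}

namespace GaussianIntegrable

lemma add (hf : GaussianIntegrable f) (hg : GaussianIntegrable g) :
    GaussianIntegrable fun r ↦ f r + g r :=
  fun s hs ↦ ((hf s hs).add (hg s hs)).congr (.of_forall fun _ ↦ (add_mul _ _ _).symm)

lemma const_mul (hf : GaussianIntegrable f) (c : ℝ) : GaussianIntegrable fun r ↦ c * f r :=
  fun s hs ↦ ((hf s hs).const_mul c).congr (.of_forall fun _ ↦ (mul_assoc _ _ _).symm)

lemma rpow (hq : -1 < q) : GaussianIntegrable fun r ↦ r ^ q :=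
  fun _ hs ↦ integrableOn_rpow_mul_exp_neg_mul_sq hs hq

lemma mono (hg : GaussianIntegrable g) (hf : AEStronglyMeasurable f (volume.restrict (Ioi 0)))
    (hfg : ∀ r, 0 < r → ‖f r‖ ≤ g r) : GaussianIntegrable f := fun s hs ↦ by
  refine (hg s hs).mono' (hf.mul (by fun_prop)) ?_
  filter_upwards [ae_restrict_mem measurableSet_Ioi] with r hr
  rw [norm_mul, norm_of_nonneg (exp_nonneg _)]
  exact mul_le_mul_of_nonneg_right (hfg r hr) (exp_nonneg _)

lemma sq_mul (hf : GaussianIntegrable f) : GaussianIntegrable fun r ↦ r ^ 2 * f r := fun s hs ↦ by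
  have hbound : ∀ r : ℝ, ‖r ^ 2 * exp (-(s / 2) * r ^ 2)‖ ≤ 2 / s := fun r ↦ by
    rw [norm_of_nonneg (by positivity), neg_mul, exp_neg, ← div_eq_mul_inv,
      div_le_div_iff₀ (exp_pos _) hs]
    linarith [add_one_le_exp (s / 2 * r ^ 2)]
  refine ((hf (s / 2) (half_pos hs)).bdd_mul (by fun_prop) (.of_forall hbound)).congr
    (.of_forall fun r ↦ ?_)
  have hexp : exp (-s * r ^ 2) = exp (-(s / 2) * r ^ 2) * exp (-(s / 2) * r ^ 2) := by
    rw [← exp_add]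
    ring_nf
  simp only [hexp]
  ring

end GaussianIntegrable

lemma gaussianTransform_const_mul (c : ℝ) (f : ℝ → ℝ) (s : ℝ) :
    gaussianTransform (fun r ↦ c * f r) s = c * gaussianTransform f s := by
  simp only [gaussianTransform, mul_assoc, integral_const_mul]

lemma gaussianTransform_sub (hf : GaussianIntegrable f) (hg : GaussianIntegrable g) (hs : 0 < s) :
    gaussianTransform (fun r ↦ f r - g r) s = gaussianTransform f s - gaussianTransform g s := by
  simp only [gaussianTransform, sub_mul, integral_sub (hf s hs) (hg s hs)]

lemma gaussianTransform_rpow (hq : -1 < q) (hs : 0 < s) :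
    gaussianTransform (fun r ↦ r ^ q) s
      = Gamma ((q + 1) / 2) / 2 * s ^ (-((q + 1) / 2)) := by
  have h := integral_rpow_mul_exp_neg_mul_rpow two_pos hq hs
  simp only [rpow_two] at h
  rw [gaussianTransform, h, neg_div]
  ring

lemma hasDerivAt_gaussianTransform (hf : GaussianIntegrable f) (hs : 0 < s) :
    HasDerivAt (gaussianTransform f) (-gaussianTransform (fun r ↦ r ^ 2 * f r) s) s := by
  have hbound : ∀ r, ∀ x ∈ Ioi (s / 2),
      ‖-(r ^ 2 * f r * exp (-x * r ^ 2))‖ ≤ ‖r ^ 2 * f r * exp (-(s / 2) * r ^ 2)‖ := by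
    intro r x hx
    rw [norm_neg, norm_mul, norm_mul _ (exp _), norm_of_nonneg (exp_nonneg _),
      norm_of_nonneg (exp_nonneg _)]
    have : s / 2 ≤ x := le_of_lt hx
    gcongr
  have hderiv : ∀ r, ∀ x ∈ Ioi (s / 2),
      HasDerivAt (fun y ↦ f r * exp (-y * r ^ 2)) (-(r ^ 2 * f r * exp (-x * r ^ 2))) x := by
    intro r x _
    convert! (((hasDerivAt_id x).neg.mul_const (r ^ 2)).exp).const_mul (f r) using 1
    simp only [id, Pi.neg_apply]
    ring
  have h := (hasDerivAt_integral_of_dominated_loc_of_deriv_le (Ioi_mem_nhds (half_lt_self hs))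
    ((lt_mem_nhds hs).mono fun x hx ↦ (hf x hx).aestronglyMeasurable) (hf s hs)
    (hf.sq_mul s hs).aestronglyMeasurable.neg (.of_forall hbound)
    (hf.sq_mul (s / 2) (half_pos hs)).norm (.of_forall hderiv)).2
  rwa [integral_neg] at h

/-- Here `x` stands for `exp (-r²)`. At `x = 0` the junk value `log 0 = 0` gives `g 0`, hence the
requirement that this be the limit at infinity. -/
lemma continuousOn_comp_sqrt_neg_log (hg : Continuous g) (hlim : Tendsto g atTop (𝓝 (g 0))) :
    ContinuousOn (fun x ↦ g √(-log x)) (Icc 0 1) := by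
  intro x hx
  rcases hx.1.eq_or_lt with rfl | hpos
  · have hlog : Tendsto (fun x ↦ √(-log x)) (𝓝[>] 0) atTop :=
      tendsto_sqrt_atTop.comp (tendsto_neg_atBot_atTop.comp tendsto_log_nhdsGT_zero)
    have hcont : ContinuousWithinAt (fun x ↦ g √(-log x)) (Ioi 0) 0 := by
      simpa [ContinuousWithinAt, Function.comp_def] using hlim.comp hlog
    exact (continuousWithinAt_insert_self.2 hcont).mono fun y hy ↦ by
      simpa [le_iff_eq_or_lt, eq_comm] using hy.1
  · exact (hg.continuousAt.comp
      (continuous_sqrt.continuousAt.comp (continuousAt_log hpos.ne').neg)).continuousWithinAt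

lemma integral_mul_exp_neg_sq_mul_eq_zero (hf : IntegrableOn (fun r ↦ f r * exp (-r ^ 2)) (Ioi 0))
    (h : ∀ n : ℕ, gaussianTransform f (n + 1) = 0) (hg : Continuous g)
    (hlim : Tendsto g atTop (𝓝 (g 0))) : ∫ r in Ioi 0, f r * exp (-r ^ 2) * g r = 0 := by
  have hmem : ∀ r, exp (-r ^ 2) ∈ Icc 0 1 := fun r ↦
    ⟨exp_nonneg _, exp_le_one_iff.2 (neg_nonpos.2 (sq_nonneg r))⟩
  have hmoment (n : ℕ) : ∫ r in Ioi 0, f r * exp (-r ^ 2) * exp (-r ^ 2) ^ n = 0 := by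
    have hpow (r : ℝ) : exp (-r ^ 2) * exp (-r ^ 2) ^ n = exp (-(n + 1) * r ^ 2) := by
      rw [← pow_succ', ← exp_nat_mul]
      push_cast
      ring_nf
    simpa only [gaussianTransform, mul_assoc, hpow] using h n
  refine (setIntegral_congr_fun measurableSet_Ioi fun r hr ↦ ?_).trans
    (integral_mul_comp_eq_zero_of_integral_mul_pow_eq_zero hf (by fun_prop)
      (.of_forall hmem) hmoment (continuousOn_comp_sqrt_neg_log hg hlim))
  simp only [log_exp, neg_neg, sqrt_sq (le_of_lt hr)]

lemma ae_eq_zero_of_gaussianTransform_natCast_eq_zero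
    (hf : IntegrableOn (fun r ↦ f r * exp (-r ^ 2)) (Ioi 0))
    (h : ∀ n : ℕ, gaussianTransform f (n + 1) = 0) : f =ᵐ[volume.restrict (Ioi 0)] 0 := by
  have htest (g : ℝ → ℝ) (hg : Continuous g) (hcompact : HasCompactSupport g)
      (hsupp : tsupport g ⊆ Ioi 0) : ∫ r, g r • (f r * exp (-r ^ 2)) = 0 := by
    have hvanish (r : ℝ) (hr : r ∉ Ioi 0) : g r = 0 :=
      image_eq_zero_of_notMem_tsupport (mt (@hsupp r) hr)
    have hlim : Tendsto g atTop (𝓝 (g 0)) := by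
      rw [hvanish 0 self_notMem_Ioi]
      exact hcompact.is_zero_at_infty.mono_left atTop_le_cocompact
    rw [← setIntegral_eq_integral_of_forall_compl_eq_zero (s := Ioi 0) fun r hr ↦ by
      rw [hvanish r hr, zero_smul]]
    simpa only [smul_eq_mul, mul_comm (g _)] using
      integral_mul_exp_neg_sq_mul_eq_zero hf h hg hlim
  have hzero := isOpen_Ioi.ae_eq_zero_of_integral_contDiff_smul_eq_zero hf.locallyIntegrableOn
    fun g hg ↦ htest g hg.continuous
  rw [← ae_restrict_iff' measurableSet_Ioi] at hzero
  exact hzero.mono fun r hr ↦ (mul_eq_zero.1 hr).resolve_right (exp_ne_zero _)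

lemma ae_eq_of_gaussianTransform_eq (hf : GaussianIntegrable f) (hg : GaussianIntegrable g)
    (h : ∀ s, 0 < s → gaussianTransform f s = gaussianTransform g s) :
    f =ᵐ[volume.restrict (Ioi 0)] g := by
  have hsub : GaussianIntegrable fun r ↦ f r - g r := by
    simpa only [sub_eq_add_neg, neg_one_mul] using hf.add (hg.const_mul (-1))
  refine (ae_eq_zero_of_gaussianTransform_natCast_eq_zero
    (by simpa using hsub 1 one_pos) fun n ↦ ?_).mono fun r hr ↦ sub_eq_zero.1 hr
  have hn : (0 : ℝ) < n + 1 := n.cast_add_one_pos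
  rw [gaussianTransform_sub hf hg hn, h _ hn, sub_self]

end GaussianTransform

lemma eq_mul_rpow_of_hasDerivAt {M : ℝ → ℝ} {p : ℝ}
    (hM : ∀ s, 0 < s → HasDerivAt M (p * M s / s) s) {s : ℝ} (hs : 0 < s) :
    M s = M 1 * s ^ p := by
  have hderiv : ∀ x ∈ Ioi (0 : ℝ), HasDerivAt (fun x ↦ M x * x ^ (-p)) 0 x := fun x hx ↦ by
    have hx0 : x ≠ 0 := ne_of_gt hx
    convert! (hM x hx).mul (hasDerivAt_rpow_const (p := -p) (Or.inl hx0)) using 1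
    rw [rpow_sub_one hx0]
    ring
  have hconst : M s * s ^ (-p) = M 1 * 1 ^ (-p) :=
    isOpen_Ioi.is_const_of_deriv_eq_zero isPreconnected_Ioi
      (fun x hx ↦ (hderiv x hx).differentiableAt.differentiableWithinAt)
      (fun x hx ↦ (hderiv x hx).deriv) hs (mem_Ioi.2 one_pos)
  rwa [one_rpow, mul_one, rpow_neg hs.le, ← div_eq_mul_inv,
    div_eq_iff (rpow_pos_of_pos hs p).ne'] at hconst

lemma eqOn_Ioi_of_ae_eq_of_continuousWithinAt_Iio {X Y : Type*} [TopologicalSpace X]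
    [LinearOrder X] [OrderTopology X] [DenselyOrdered X] [MeasurableSpace X]
    [OpensMeasurableSpace X] {μ : Measure X} [μ.IsOpenPosMeasure] [TopologicalSpace Y] [T2Space Y]
    {f g : X → Y} {a : X} (hf : ∀ x, a < x → ContinuousWithinAt f (Iio x) x)
    (hg : ∀ x, a < x → ContinuousWithinAt g (Iio x) x) (h : f =ᵐ[μ.restrict (Ioi a)] g) :
    EqOn f g (Ioi a) := by
  intro x (hx : a < x)
  have hdense : Dense {y | y ∈ Ioi a → f y = g y} :=
    Measure.dense_of_ae ((ae_restrict_iff' measurableSet_Ioi).1 h)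
  refine tendsto_nhds_unique_of_frequently_eq (hf x hx) (hg x hx) (frequently_iff.2 fun hU ↦ ?_)
  obtain ⟨l, hl, hlU⟩ := (mem_nhdsLT_iff_exists_Ioo_subset' hx).1 hU
  obtain ⟨y, hy, hly, hyx⟩ := hdense.exists_between (max_lt hl hx)
  exact ⟨y, hlU ⟨(le_max_left _ _).trans_lt hly, hyx⟩, hy ((le_max_right _ _).trans_lt hly)⟩

section VolumeRigidity

variable {N : ℝ} {V : ℝ → ℝ}

lemma gaussianIntegrable_id_mul_of_le_mul_max_one_rpow {C : ℝ} (hN : -2 < N)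
    (hV : AEMeasurable V (volume.restrict (Ioi 0)))
    (hgrowth : ∀ r, 0 < r → ‖V r‖ ≤ C * max 1 (r ^ N)) :
    GaussianIntegrable fun r ↦ r * V r := by
  have hpow : GaussianIntegrable fun r ↦ C * (r ^ (1 : ℝ) + r ^ (N + 1)) :=
    ((GaussianIntegrable.rpow (by norm_num)).add (.rpow (by linarith))).const_mul C
  refine hpow.mono (aemeasurable_id.mul hV).aestronglyMeasurable fun r hr ↦ ?_
  have hC : 0 ≤ C := by
    simpa using (norm_nonneg _).trans (hgrowth 1 one_pos)
  have hrN : 0 ≤ r ^ N := rpow_nonneg hr.le N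
  calc ‖r * V r‖ = r * ‖V r‖ := by rw [norm_mul, norm_of_nonneg hr.le]
    _ ≤ r * (C * (1 + r ^ N)) := by
      gcongr
      exact (hgrowth r hr).trans (by gcongr; exact max_le_add_of_nonneg zero_le_one hrN)
    _ = C * (r ^ (1 : ℝ) + r ^ (N + 1)) := by
      rw [rpow_one, rpow_add_one hr.ne']
      ring

lemma gaussianTransform_sq_mul_of_integral_identity (hN : N ≠ 0)
    (hint : GaussianIntegrable fun r ↦ r * V r)
    (hid : ∀ t : ℝ, 0 < t →
      (1 / (2 * t)) * ∫ r in Ioi (0 : ℝ), r * V r * exp (-(r ^ 2) / (4 * t))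
        = (1 / (2 * N * t)) *
            ∫ r in Ioi (0 : ℝ), V r * (r ^ 3 / (2 * t) - 2 * r) * exp (-(r ^ 2) / (4 * t)))
    {s : ℝ} (hs : 0 < s) :
    2 * s * gaussianTransform (fun r ↦ r ^ 2 * (r * V r)) s
      = (N + 2) * gaussianTransform (fun r ↦ r * V r) s := by
  have hexp (r : ℝ) : -(r ^ 2) / (4 * (1 / (4 * s))) = -s * r ^ 2 := by
    field_simp
  have hweight (r : ℝ) : V r * (r ^ 3 / (2 * (1 / (4 * s))) - 2 * r)
      = 2 * s * (r ^ 2 * (r * V r)) - 2 * (r * V r) := by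
    field_simp
    ring
  have h := hid (1 / (4 * s)) (by positivity)
  simp only [hexp, hweight] at h
  change _ * gaussianTransform (fun r ↦ r * V r) s = _ * gaussianTransform (fun r ↦ _ - _) s at h
  rw [gaussianTransform_sub (hint.sq_mul.const_mul _) (hint.const_mul _) hs,
    gaussianTransform_const_mul, gaussianTransform_const_mul] at h
  generalize gaussianTransform (fun r ↦ r * V r) s = M₁,
    gaussianTransform (fun r ↦ r ^ 2 * (r * V r)) s = M₃ at h ⊢
  field_simp at h
  linarith

theorem volume_rigidity_general (hN : -2 < N) (hN0 : N ≠ 0)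
    (hVlc : ∀ r, 0 < r → ContinuousWithinAt V (Iio r) r)
    (hint : GaussianIntegrable fun r ↦ r * V r)
    (hid : ∀ t : ℝ, 0 < t →
      (1 / (2 * t)) * ∫ r in Ioi (0 : ℝ), r * V r * exp (-(r ^ 2) / (4 * t))
        = (1 / (2 * N * t)) *
            ∫ r in Ioi (0 : ℝ), V r * (r ^ 3 / (2 * t) - 2 * r) * exp (-(r ^ 2) / (4 * t))) :
    ∃ c : ℝ, ∀ r, 0 < r → V r = c * r ^ N := by
  set M := gaussianTransform fun r ↦ r * V r
  have hode (s : ℝ) (hs : 0 < s) : HasDerivAt M (-((N + 2) / 2) * M s / s) s := by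
    convert hasDerivAt_gaussianTransform hint hs using 1
    have heuler : 2 * s * _ = (N + 2) * M s :=
      gaussianTransform_sq_mul_of_integral_identity hN0 hint hid hs
    rw [neg_mul, neg_div, neg_inj, div_eq_iff hs.ne']
    linarith
  set c := M 1 / (Gamma ((N + 2) / 2) / 2)
  have hpow : GaussianIntegrable fun r ↦ r ^ (N + 1) := .rpow (by linarith)
  have htransform (s : ℝ) (hs : 0 < s) :
      M s = gaussianTransform (fun r ↦ c * r ^ (N + 1)) s := by
    have hΓ : Gamma ((N + 2) / 2) ≠ 0 := (Gamma_pos_of_pos (by linarith)).ne'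
    rw [eq_mul_rpow_of_hasDerivAt hode hs, gaussianTransform_const_mul,
      gaussianTransform_rpow (by linarith) hs, add_assoc, one_add_one_eq_two, ← mul_assoc,
      div_mul_cancel₀ _ (by positivity)]
  have hae : V =ᵐ[volume.restrict (Ioi 0)] fun r ↦ c * r ^ N := by
    filter_upwards [ae_eq_of_gaussianTransform_eq hint (hpow.const_mul c) htransform,
      ae_restrict_mem measurableSet_Ioi] with r hr hr0
    have hr0 : r ≠ 0 := ne_of_gt hr0
    rw [rpow_add_one hr0, ← mul_assoc, mul_comm] at hr
    exact mul_right_cancel₀ hr0 hr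
  exact ⟨c, eqOn_Ioi_of_ae_eq_of_continuousWithinAt_Iio hVlc (fun r hr ↦
    (continuousAt_const.mul (continuousAt_rpow_const r N (.inl hr.ne'))).continuousWithinAt) hae⟩

lemma eq_mul_rpow_of_monotoneOn_of_nonneg {c : ℝ} (hN : 0 < N) (hmono : MonotoneOn V (Ici 0))
    (h0 : 0 ≤ V 0) (hV : ∀ r, 0 < r → V r = c * r ^ N) (r : ℝ) (hr : 0 ≤ r) :
    V r = c * r ^ N := by
  rcases hr.eq_or_lt with rfl | hr
  · have hcont : ContinuousAt (fun r : ℝ ↦ c * r ^ N) 0 :=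
      continuousAt_const.mul (continuousAt_rpow_const 0 N (.inr hN.le))
    have hlim := hcont.tendsto.mono_left (nhdsWithin_le_nhds (s := Ioi 0))
    refine le_antisymm (ge_of_tendsto hlim ?_) (by rwa [zero_rpow hN.ne', mul_zero])
    filter_upwards [self_mem_nhdsWithin] with x (hx : 0 < x)
    exact hV x hx ▸ hmono self_mem_Ici hx.le hx.le
  · exact hV r hr

end VolumeRigidity

/-- Rigidity of the volume function: a nondecreasing, left-continuous function
`V` on `[0,∞)`, positive on `(0,∞)`, with polynomial growth `V(r) ≤ C max(1,r^N)`,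
satisfying the Gaussian-integral identity for all `t > 0`, must equal
`c₁ r^N` for some constant `c₁ > 0`. -/
theorem volume_rigidity
    (N C : ℝ) (hN : 1 ≤ N) (hC : 0 < C)
    (V : ℝ → ℝ)
    (hVmono : MonotoneOn V (Set.Ici 0))
    (hVlc : ∀ r : ℝ, 0 < r → ContinuousWithinAt V (Set.Iio r) r)
    (hVpos : ∀ r : ℝ, 0 < r → 0 < V r)
    (hVnonneg : ∀ r : ℝ, 0 ≤ r → 0 ≤ V r)
    (hVgrowth : ∀ r : ℝ, 0 ≤ r → V r ≤ C * max 1 (r ^ N))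
    (hid : ∀ t : ℝ, 0 < t →
      (1 / (2 * t)) * ∫ r in Set.Ioi (0:ℝ), r * V r * Real.exp (-(r ^ 2) / (4 * t))
        = (1 / (2 * N * t)) *
            ∫ r in Set.Ioi (0:ℝ),
              V r * (r ^ 3 / (2 * t) - 2 * r) * Real.exp (-(r ^ 2) / (4 * t))) :
    ∃ c₁ : ℝ, 0 < c₁ ∧ ∀ r : ℝ, 0 ≤ r → V r = c₁ * r ^ N := by
  have hint : GaussianIntegrable fun r ↦ r * V r :=
    gaussianIntegrable_id_mul_of_le_mul_max_one_rpow (by linarith)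
      (aemeasurable_restrict_of_monotoneOn measurableSet_Ioi (hVmono.mono Ioi_subset_Ici_self))
      fun r hr ↦ (norm_of_nonneg (hVnonneg r hr.le)).trans_le (hVgrowth r hr.le)
  obtain ⟨c, hc⟩ := volume_rigidity_general (by linarith) (by linarith) hVlc hint hid
  exact ⟨c, by simpa [hc 1 one_pos] using hVpos 1 one_pos,
    eq_mul_rpow_of_monotoneOn_of_nonneg (by linarith) hVmono (hVnonneg 0 le_rfl) hc⟩
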